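/- arXiv:1712.10259 — 2 statements merged into one kernel-verified Lean document; each statement's English description precedes it below -/
import Mathlib

section
/- Let Σ = {a,b}, let L ⊆ Σ* be a regular language, and let x_n denote the n-th word over {a,b} in shortlex order. Then the language M = {(n)_2 : n ≥ 0 and x_n ∈ L} of canonical base-2 representations of those indices n with x_n ∈ L is a regular language over the alphabet {0,1}. -/
/-- `word n` is the `n`-th word over the two-letter alphabet `{a, b}` in shortlex
(dictionary) order, encoding `a` as `false` and `b` as `true`:
`word 0 = Λ`, `word (2n+1) = word n ++ [a]`, `word (2n+2) = word n ++ [b]`. -/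
def word : ℕ → List Bool
  | 0 => []
  | n + 1 => word (n / 2) ++ [decide (n % 2 = 1)]
decreasing_by exact Nat.lt_succ_of_le (Nat.div_le_self n 2)

/-- A language `L ⊆ Σ*` is regular if it is accepted by a deterministic finite
automaton, i.e. by a finite set of states with a transition function, an initial
state, and a set of accepting states. -/
def IsRegularLanguage {α : Type} (L : Set (List α)) : Prop :=
  ∃ (Q : Type) (_ : Fintype Q) (step : Q → α → Q) (start : Q) (accept : Set Q),
    L = {w | w.foldl step start ∈ accept}

/-- `rep n` is the canonical base-2 representation `(n)_2` of `n` as a word over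
`{0, 1}` (encoded as `Bool`, `0 = false`, `1 = true`), most significant digit
first, with no leading zeros; `rep 0` is the empty word. -/
def rep (n : ℕ) : List Bool := (Nat.bits n).reverse

theorem word_zero : word 0 = [] := by
  rw [word]

theorem word_two_mul_add_one (n : ℕ) : word (2 * n + 1) = word n ++ [false] := by
  rw [word]
  simp

theorem word_two_mul_add_two (n : ℕ) : word (2 * n + 2) = word n ++ [true] := by
  rw [word, show (2 * n + 1) / 2 = n by omega, show (2 * n + 1) % 2 = 1 by omega]
  simp

theorem rep_zero : rep 0 = [] := by
  simp [rep]

theorem rep_two_mul {n : ℕ} (hn : n ≠ 0) : rep (2 * n) = rep n ++ [false] := by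
  rw [rep, Nat.bit0_bits n hn, List.reverse_cons, rep]

theorem rep_two_mul_add_one (n : ℕ) : rep (2 * n + 1) = rep n ++ [true] := by
  rw [rep, Nat.bit1_bits, List.reverse_cons, rep]

/-- Transition function on binary digits. `none` is a sink for words with a leading zero,
`some none` means that the number read so far is `0`, and `some (some (p, q))` means that it is
some `n + 1`, with `p` and `q` the states reached on `word n` and `word (n + 1)`. -/
def repStep {Q : Type} (step : Q → Bool → Q) (start : Q) :
    Option (Option (Q × Q)) → Bool → Option (Option (Q × Q))
  | none, _ => none
  | some none, false => none
  | some none, true => some (some (start, step start false))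
  | some (some (p, _)), false => some (some (step p false, step p true))
  | some (some (p, q)), true => some (some (step p true, step q false))

/-- The state of the automaton `repStep` after reading `rep n`. -/
def repState {Q : Type} (step : Q → Bool → Q) (start : Q) : ℕ → Option (Q × Q)
  | 0 => none
  | n + 1 => some ((word n).foldl step start, (word (n + 1)).foldl step start)

section

variable {Q : Type} (step : Q → Bool → Q) (start : Q)

theorem repStep_repState_false {n : ℕ} (hn : n ≠ 0) :
    repStep step start (some (repState step start n)) false =
      some (repState step start (2 * n)) := by
  obtain ⟨m, rfl⟩ := Nat.exists_eq_succ_of_ne_zero hn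
  change _ = some (repState step start (2 * m + 1 + 1))
  simp [repState, repStep, word_two_mul_add_one, word_two_mul_add_two]

theorem repStep_repState_true (n : ℕ) :
    repStep step start (some (repState step start n)) true =
      some (repState step start (2 * n + 1)) := by
  cases n with
  | zero =>
    have h := word_two_mul_add_one 0
    simp only [mul_zero, zero_add] at h
    simp [repState, repStep, h, word_zero]
  | succ m =>
    simp only [repState, repStep, word_two_mul_add_one]
    rw [show 2 * (m + 1) = 2 * m + 2 from rfl, word_two_mul_add_two]
    simp

theorem foldl_repStep_rep (n : ℕ) :
    (rep n).foldl (repStep step start) (some none) = some (repState step start n) := by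
  induction n using Nat.strong_induction_on with
  | _ n ih =>
    obtain ⟨m, rfl | rfl⟩ := Nat.even_or_odd' n
    · rcases eq_or_ne m 0 with rfl | hm
      · simp [rep_zero, repState]
      · rw [rep_two_mul hm, List.foldl_concat, ih m (by omega), repStep_repState_false _ _ hm]
    · rw [rep_two_mul_add_one, List.foldl_concat, ih m (by omega), repStep_repState_true]

theorem exists_eq_rep_of_foldl_ne_none (w : List Bool)
    (hw : w.foldl (repStep step start) (some none) ≠ none) : ∃ n, w = rep n := by
  induction w using List.reverseRecOn with
  | nil => exact ⟨0, rep_zero.symm⟩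
  | append_singleton w b ih =>
    rw [List.foldl_concat] at hw
    obtain ⟨n, rfl⟩ := ih fun h => hw (by rw [h, repStep])
    cases b with
    | true => exact ⟨2 * n + 1, (rep_two_mul_add_one n).symm⟩
    | false =>
      refine ⟨2 * n, (rep_two_mul ?_).symm⟩
      rintro rfl
      exact hw (by simp [rep_zero, repStep])

end

/-- If `L ⊆ {a,b}*` is regular, then the language
`M = {(n)_2 : n ≥ 0, x_n ∈ L}` of canonical base-2 representations of the
indices `n` with `x_n ∈ L` is a regular language over `{0, 1}`. -/
theorem isRegularLanguage_rep_mem (L : Set (List Bool)) (hL : IsRegularLanguage L) :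
    IsRegularLanguage {w : List Bool | ∃ n : ℕ, w = rep n ∧ word n ∈ L} := by
  obtain ⟨Q, _, step, start, accept, rfl⟩ := hL
  refine ⟨Option (Option (Q × Q)), inferInstance, repStep step start, some none,
    {s | ∃ r, s = some r ∧ (r.elim start Prod.snd) ∈ accept}, ?_⟩
  have key (n : ℕ) :
      (repState step start n).elim start Prod.snd = (word n).foldl step start := by
    cases n <;> simp [repState, word_zero]
  ext w
  constructor
  · rintro ⟨n, rfl, hn⟩
    exact ⟨_, foldl_repStep_rep step start n, by rw [key]; exact hn⟩
  · rintro ⟨r, hr, hacc⟩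
    obtain ⟨n, rfl⟩ := exists_eq_rep_of_foldl_ne_none step start w (by simp [hr])
    rw [foldl_repStep_rep, Option.some_inj] at hr
    subst hr
    exact ⟨n, rfl, by rw [key] at hacc; exact hacc⟩
end

section
/- Let Σ = {a,b}, let L ⊆ Σ* be a regular language, let x_n denote the n-th word over {a,b} in shortlex order, and let M = {(n)_2 : n ≥ 0 and x_n ∈ L} ⊆ {0,1}* with characteristic function χ_M : {0,1}* → K into a field K. Then the set of right translates {χ_M ↼ (n)_2 : n ≥ 1}, i.e., the set of functions v ↦ χ_M((n)_2 v) on {0,1}* as n ranges over the positive integers, is finite. -/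
theorem rep_bit {n : ℕ} (hn : 1 ≤ n) (b : Bool) : rep (Nat.bit b n) = rep n ++ [b] := by
  unfold rep
  rw [Nat.bits_append_bit n b (fun h => by omega), List.reverse_cons]

theorem rep_injective : Function.Injective rep := fun m n h => by
  have h' : Nat.bits m = Nat.bits n := List.reverse_injective h
  have key : ∀ k : ℕ, (Nat.bits k).foldr Nat.bit 0 = k := fun k => by
    induction k using Nat.binaryRec' with
    | zero => simp
    | bit b k hb ih => rw [Nat.bits_append_bit k b hb, List.foldr_cons, ih]
  rw [← key m, h', key n]

theorem one_le_bit {n : ℕ} (hn : 1 ≤ n) (b : Bool) : 1 ≤ Nat.bit b n := by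
  cases b <;> simp [Nat.bit]
  omega

theorem word_succ (n : ℕ) : word (n + 1) = word (n / 2) ++ [decide (n % 2 = 1)] := by
  rw [word]

/-- The states reached by a deterministic automaton on `word n` and on `word (n - 1)`. -/
def statePair {Q : Type} (step : Q → Bool → Q) (start : Q) (n : ℕ) : Q × Q :=
  ((word n).foldl step start, (word (n - 1)).foldl step start)

/-- The transition on pairs of states induced by appending a binary digit. -/
def pairStep {Q : Type} (step : Q → Bool → Q) (p : Q × Q) (b : Bool) : Q × Q :=
  if b then (step p.1 false, step p.2 true) else (step p.2 true, step p.2 false)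

theorem statePair_bit {Q : Type} (step : Q → Bool → Q) (start : Q) {n : ℕ} (hn : 1 ≤ n)
    (b : Bool) :
    statePair step start (Nat.bit b n) = pairStep step (statePair step start n) b := by
  obtain ⟨k, rfl⟩ : ∃ k, n = k + 1 := ⟨n - 1, by omega⟩
  have word_odd (m : ℕ) : word (2 * m + 1) = word m ++ [false] := by
    rw [word_succ, show 2 * m / 2 = m by omega, show 2 * m % 2 = 0 by omega]; rfl
  have word_even (m : ℕ) : word (2 * m + 2) = word m ++ [true] := by
    rw [word_succ, show (2 * m + 1) / 2 = m by omega, show (2 * m + 1) % 2 = 1 by omega]; rfl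
  cases b
  · have h : Nat.bit false (k + 1) = 2 * k + 2 := by simp [Nat.bit]; omega
    simp [statePair, pairStep, h, word_even, word_odd]
  · have h : Nat.bit true (k + 1) = 2 * (k + 1) + 1 := by simp [Nat.bit]
    have h' : 2 * (k + 1) + 1 - 1 = 2 * k + 2 := by omega
    simp only [statePair, h, h', word_odd, word_even]
    simp [pairStep]

theorem exists_rep_eq_append {Q : Type} (step : Q → Bool → Q) (start : Q) (v : List Bool)
    {n : ℕ} (hn : 1 ≤ n) :
    ∃ m, rep m = rep n ++ v ∧
      statePair step start m = v.foldl (pairStep step) (statePair step start n) := by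
  induction v generalizing n with
  | nil => exact ⟨n, by simp, rfl⟩
  | cons b v ih =>
    obtain ⟨m, hm, hs⟩ := ih (one_le_bit hn b)
    exact ⟨m, by rw [hm, rep_bit hn]; simp, by rw [hs, statePair_bit step start hn]; rfl⟩

open scoped Classical in
/-- Let `L ⊆ {a,b}*` be regular, let `M = {(n)_2 : x_n ∈ L} ⊆ {0,1}*`, and let
`χ_M : {0,1}* → K` (`K` a field) be the characteristic function of `M`.  Then the
set of right translates `χ_M ↼ (n)_2 = (v ↦ χ_M ((n)_2 v))`, for `n ≥ 1`, is
finite. -/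
theorem finite_rightTranslates_of_rep {K : Type} [Field K]
    (L : Set (List Bool)) (hL : IsRegularLanguage L) :
    Set.Finite {f : List Bool → K | ∃ n : ℕ, 1 ≤ n ∧
      f = fun v => if rep n ++ v ∈ {w : List Bool | ∃ m : ℕ, w = rep m ∧ word m ∈ L}
        then (1 : K) else 0} := by
  obtain ⟨Q, _, step, start, accept, rfl⟩ := hL
  refine (Set.finite_range fun (p : Q × Q) (v : List Bool) =>
    if (v.foldl (pairStep step) p).1 ∈ accept then (1 : K) else 0).subset ?_
  rintro f ⟨n, hn, rfl⟩
  refine ⟨statePair step start n, funext fun v => ?_⟩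
  obtain ⟨m, hm, hs⟩ := exists_rep_eq_append step start v hn
  refine if_congr ?_ rfl rfl
  rw [← hs, ← hm]
  constructor
  · exact fun h => ⟨m, rfl, h⟩
  · rintro ⟨k, hk, h⟩
    rwa [rep_injective hk]
end
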